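/- Let (Λ, μ) be a probability space and let A₀, A₁, B₀, B₁ : Λ → ℝ be integrable functions taking values in the interval [−1, 1]. Define the correlations C(X, Y) = ∫ A_X(λ)·B_Y(λ) dμ(λ) for X, Y ∈ {0, 1}. Then C(0,0) + C(0,1) + C(1,0) − C(1,1) ≤ 2. -/

import Mathlib

open MeasureTheory

/-!
For a fixed hidden variable the CHSH combination is `a * (b + b') + a' * (b - b')`. With outcomes
`a, a'` in `[-1, 1]` it is at most `|b + b'| + |b - b'| = 2 * max |b| |b'|` in absolute value.
Since one measure `μ` serves all four settings, the four correlations combine into the integral of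
this single expression.
-/

theorem abs_add_add_abs_sub {G : Type*} [AddCommGroup G] [LinearOrder G] [IsOrderedAddMonoid G]
    (a b : G) : |a + b| + |a - b| = 2 • max |a| |b| := by
  grind

theorem abs_chsh_le {R : Type*} [CommRing R] [LinearOrder R] [IsStrictOrderedRing R]
    {a a' b b' c : R} (ha : |a| ≤ 1) (ha' : |a'| ≤ 1) (hb : |b| ≤ c) (hb' : |b'| ≤ c) :
    |a * b + a * b' + a' * b - a' * b'| ≤ 2 * c :=
  calc |a * b + a * b' + a' * b - a' * b'| = |a * (b + b') + a' * (b - b')| := by ring_nf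
    _ ≤ |a * (b + b')| + |a' * (b - b')| := abs_add_le _ _
    _ = |a| * |b + b'| + |a'| * |b - b'| := by rw [abs_mul, abs_mul]
    _ ≤ |b + b'| + |b - b'| :=
        add_le_add (mul_le_of_le_one_left (abs_nonneg _) ha)
          (mul_le_of_le_one_left (abs_nonneg _) ha')
    _ = 2 * max |b| |b'| := by rw [abs_add_add_abs_sub, nsmul_eq_mul, Nat.cast_ofNat]
    _ ≤ 2 * c := by gcongr; exact max_le hb hb'

theorem chsh_inequality_general {Λ : Type*} [MeasurableSpace Λ] {μ : Measure Λ}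
    {A B : Fin 2 → Λ → ℝ} {g : Λ → ℝ}
    (hAmeas : ∀ X, AEStronglyMeasurable (A X) μ) (hBmeas : ∀ Y, AEStronglyMeasurable (B Y) μ)
    (hg : Integrable g μ) (hA : ∀ X, ∀ᵐ l ∂μ, |A X l| ≤ 1) (hB : ∀ Y, ∀ᵐ l ∂μ, |B Y l| ≤ g l) :
    |(∫ l, A 0 l * B 0 l ∂μ) + (∫ l, A 0 l * B 1 l ∂μ) +
      (∫ l, A 1 l * B 0 l ∂μ) - (∫ l, A 1 l * B 1 l ∂μ)| ≤ 2 * ∫ l, g l ∂μ := by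
  have hAB (X Y) : Integrable (fun l ↦ A X l * B Y l) μ :=
    (hg.mono' (hBmeas Y) (hB Y)).bdd_mul (hAmeas X) (hA X)
  have pointwise_bound : ∀ᵐ l ∂μ,
      ‖A 0 l * B 0 l + A 0 l * B 1 l + A 1 l * B 0 l - A 1 l * B 1 l‖ ≤ 2 * g l := by
    filter_upwards [hA 0, hA 1, hB 0, hB 1] with l hA₀ hA₁ hB₀ hB₁
    exact abs_chsh_le hA₀ hA₁ hB₀ hB₁
  calc
    _ = ‖∫ l, A 0 l * B 0 l + A 0 l * B 1 l + A 1 l * B 0 l - A 1 l * B 1 l ∂μ‖ := by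
      rw [Real.norm_eq_abs,
        integral_sub (((hAB 0 0).fun_add (hAB 0 1)).fun_add (hAB 1 0)) (hAB 1 1),
        integral_add ((hAB 0 0).fun_add (hAB 0 1)) (hAB 1 0), integral_add (hAB 0 0) (hAB 0 1)]
    _ ≤ ∫ l, 2 * g l ∂μ := norm_integral_le_of_norm_le (hg.const_mul 2) pointwise_bound
    _ = 2 * ∫ l, g l ∂μ := integral_const_mul _ _

/-- The CHSH inequality: for a probability space (Λ, μ) and integrable outcome
functions A₀, A₁, B₀, B₁ : Λ → [−1, 1], the correlations C(X,Y) = ∫ A_X·B_Y dμ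
satisfy C(0,0) + C(0,1) + C(1,0) − C(1,1) ≤ 2. -/
theorem chsh_inequality {Λ : Type*} [MeasurableSpace Λ] (μ : Measure Λ)
    [IsProbabilityMeasure μ] (A B : Fin 2 → Λ → ℝ)
    (hAint : ∀ X, Integrable (A X) μ) (hBint : ∀ Y, Integrable (B Y) μ)
    (hA : ∀ X l, A X l ∈ Set.Icc (-1 : ℝ) 1)
    (hB : ∀ Y l, B Y l ∈ Set.Icc (-1 : ℝ) 1) :
    (∫ l, A 0 l * B 0 l ∂μ) + (∫ l, A 0 l * B 1 l ∂μ) +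
      (∫ l, A 1 l * B 0 l ∂μ) - (∫ l, A 1 l * B 1 l ∂μ) ≤ 2 := by
  simpa using le_of_abs_le <| chsh_inequality_general
    (fun X ↦ (hAint X).aestronglyMeasurable) (fun Y ↦ (hBint Y).aestronglyMeasurable)
    (integrable_const 1) (fun X ↦ .of_forall fun l ↦ abs_le.2 (hA X l))
    (fun Y ↦ .of_forall fun l ↦ abs_le.2 (hB Y l))
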